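/- For any claw-free graph G and any graph H, γ(G □ H) ≥ (2/3)·γ(G)·γ(H). -/

import Mathlib

open SimpleGraph

/-- `S` is a dominating set of `G`. -/
def IsDomSet {V : Type*} (G : SimpleGraph V) (S : Set V) : Prop :=
  ∀ v : V, v ∈ S ∨ ∃ u ∈ S, G.Adj u v

/-- The domination number of a finite graph. -/
noncomputable def domNum {V : Type*} [Fintype V] (G : SimpleGraph V) : ℕ :=
  sInf {n | ∃ S : Finset V, IsDomSet G ↑S ∧ S.card = n}

/-- `Γ` is a minimum dominating set of `G`. -/
def IsMinDomSet {V : Type*} [Fintype V] (G : SimpleGraph V) (Γ : Finset V) : Prop :=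
  IsDomSet G ↑Γ ∧ Γ.card = domNum G

/-- `G` is a cograph: it has no induced `P₄`. -/
def IsCograph {V : Type*} (G : SimpleGraph V) : Prop :=
  ¬ ∃ f : Fin 4 ↪ V, ∀ a b : Fin 4, (pathGraph 4).Adj a b ↔ G.Adj (f a) (f b)

/-- `w` is a private neighbor of `v` with respect to `Γ`. -/
def PrivNbr {V : Type*} (G : SimpleGraph V) (Γ : Set V) (v w : V) : Prop :=
  w ∉ Γ ∧ G.Adj v w ∧ ∀ u ∈ Γ, G.Adj u w → u = v

/-- `w` is a shared neighbor of exactly `v₁` and `v₂` within `Γ`. -/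
def SharedNbr {V : Type*} (G : SimpleGraph V) (Γ : Set V) (v₁ v₂ w : V) : Prop :=
  w ∉ Γ ∧ ∀ u ∈ Γ, G.Adj u w ↔ (u = v₁ ∨ u = v₂)

/-- `G` is claw-free: it has no induced `K_{1,3}`. -/
def IsClawFree {V : Type*} (G : SimpleGraph V) : Prop :=
  ¬ ∃ f : (Fin 1 ⊕ Fin 3) ↪ V, ∀ a b,
    (completeBipartiteGraph (Fin 1) (Fin 3)).Adj a b ↔ G.Adj (f a) (f b)

/-!
Fix a minimum dominating set `Γ` of `G` that is independent, and a minimum dominating set `D` of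
`G □ H`. For `i ∈ Γ` let `A i` be the set of rows in which `D` meets the closed neighborhood of `i`,
and `F i` the set of rows in which `D` meets the closed private neighborhood of `i`. Since `Γ` is
independent, `i` is its own private neighbor, so `F i` dominates every row outside `A i`. Inside
`A i \ F i`, Ore's bound dominates all but the isolated rows with half of the vertices; hence
`2 γ(H) ≤ |A i| + |F i| + |I i|`, where `I i` consists of the isolated rows of `A i`.

Now sum over `Γ`. If every vertex of `G` lies in at most `r` closed neighborhoods of members of `Γ`
(and `2 ≤ r`), the sets `A i` and `F i` contribute at most `r |D|`, because a private neighbor is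
counted just twice. The sets `I i` contribute at most `|D|`: if `h` is in `I i` for all `i ∈ Γ'`,
then in row `h` the closed neighborhood of `Γ'` is dominated within that row, so replacing `Γ'` by
the columns in which `D` meets row `h` turns `Γ` into another dominating set of `G`.

For claw-free `G`, a vertex is dominated by at most two members of an independent set, so `r = 2`,
and by Allan and Laskar some minimum dominating set is independent.
-/

section Domination

variable {V : Type*} {G : SimpleGraph V}

/-- `u` dominates `v` in `G`: `v` lies in the closed neighborhood of `u`. -/
def Dominates (G : SimpleGraph V) (u v : V) : Prop :=
  u = v ∨ G.Adj u v

theorem Dominates.refl (v : V) : Dominates G v v :=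
  Or.inl rfl

theorem Dominates.symm {u v : V} (h : Dominates G u v) : Dominates G v u :=
  h.imp Eq.symm Adj.symm

theorem Dominates.eq_of_isIndepSet {u v : V} (huv : Dominates G u v) {S : Set V}
    (hS : G.IsIndepSet S) (hu : u ∈ S) (hv : v ∈ S) : u = v :=
  huv.resolve_right fun hadj => hS hu hv hadj.ne hadj

theorem isDomSet_iff_dominates {S : Set V} :
    IsDomSet G S ↔ ∀ v, ∃ u ∈ S, Dominates G u v := by
  simp only [IsDomSet, Dominates, and_or_left, exists_or, exists_eq_right]

theorem IsDomSet.domNum_le_card [Fintype V] {S : Finset V} (hS : IsDomSet G ↑S) :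
    domNum G ≤ S.card :=
  Nat.sInf_le ⟨S, hS, rfl⟩

theorem exists_isMinDomSet [Fintype V] (G : SimpleGraph V) : ∃ S, IsMinDomSet G S := by
  have huniv : IsDomSet G ↑(Finset.univ : Finset V) := fun v => Or.inl (by simp)
  exact Nat.sInf_mem (s := {n | ∃ S : Finset V, IsDomSet G ↑S ∧ S.card = n}) ⟨_, _, huniv, rfl⟩

theorem exists_isIndepSet_superset_dominating {S B : Finset V} (hSB : S ⊆ B)
    (hS : G.IsIndepSet ↑S) :
    ∃ T, S ⊆ T ∧ T ⊆ B ∧ G.IsIndepSet ↑T ∧ ∀ b ∈ B, ∃ t ∈ T, Dominates G t b := by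
  classical
  have hfin : {T : Finset V | T ⊆ B ∧ G.IsIndepSet ↑T}.Finite :=
    B.powerset.finite_toSet.subset fun T hT => Finset.mem_powerset.2 hT.1
  obtain ⟨T, hST, ⟨hTB, hT⟩, hmax⟩ := hfin.exists_le_maximal (a := S) ⟨hSB, hS⟩
  refine ⟨T, hST, hTB, hT, fun b hb => ?_⟩
  by_contra! hbT
  have hinsert : G.IsIndepSet ↑(insert b T) := by
    rw [Finset.coe_insert, IsIndepSet, Set.pairwise_insert]
    exact ⟨hT, fun t ht _ =>
      ⟨fun hadj => hbT t ht (Or.inr hadj.symm), fun hadj => hbT t ht (Or.inr hadj)⟩⟩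
  have hbmem : b ∈ T :=
    hmax ⟨Finset.insert_subset hb hTB, hinsert⟩ (T.subset_insert b) (T.mem_insert_self b)
  exact hbT b hbmem (Dominates.refl b)

open scoped Classical in
/-- The isolated vertices of the subgraph of `G` induced by `B`, as vertices of `G`. -/
noncomputable def isolatedVertices (G : SimpleGraph V) (B : Finset V) : Finset V :=
  {b ∈ B | ∀ c ∈ B, ¬ G.Adj c b}

theorem mem_isolatedVertices {B : Finset V} {b : V} :
    b ∈ isolatedVertices G B ↔ b ∈ B ∧ ∀ c ∈ B, ¬ G.Adj c b := by
  classical exact Finset.mem_filter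

theorem isolatedVertices_sdiff_subset [DecidableEq V] (A F : Finset V) :
    isolatedVertices G A \ F ⊆ isolatedVertices G (A \ F) := by
  intro v hv
  obtain ⟨hiso, hvF⟩ := Finset.mem_sdiff.1 hv
  obtain ⟨hvA, hnadj⟩ := mem_isolatedVertices.1 hiso
  exact mem_isolatedVertices.2 ⟨Finset.mem_sdiff.2 ⟨hvA, hvF⟩,
    fun u hu => hnadj u (Finset.mem_sdiff.1 hu).1⟩

-- Ore's bound. A maximal independent set of non-isolated vertices and its complement both dominate
-- the non-isolated vertices; take the smaller one.
theorem exists_dominating_two_mul_card_add_card_isolatedVertices_le (G : SimpleGraph V)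
    (B : Finset V) :
    ∃ S : Finset V, 2 * S.card + (isolatedVertices G B).card ≤ B.card ∧
      ∀ b ∈ B, b ∉ isolatedVertices G B → ∃ s ∈ S, Dominates G s b := by
  classical
  set C := B \ isolatedVertices G B with hC
  obtain ⟨S, -, hSC, hS, hdom⟩ :=
    exists_isIndepSet_superset_dominating (G := G) (Finset.empty_subset C) (by simp)
  have hadj : ∀ b ∈ C, ∃ c ∈ C, G.Adj c b := by
    intro b hb
    simp only [hC, Finset.mem_sdiff, mem_isolatedVertices, not_and, not_forall, not_not] at hb ⊢
    obtain ⟨c, hcB, hcb⟩ := hb.2 hb.1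
    exact ⟨c, ⟨hcB, fun _ => ⟨b, hb.1, hcb.symm⟩⟩, hcb⟩
  have hcompl : ∀ b ∈ C, ∃ s ∈ C \ S, Dominates G s b := by
    intro b hb
    by_cases hbS : b ∈ S
    · obtain ⟨c, hc, hcb⟩ := hadj b hb
      have hcS : c ∉ S := fun hcS => hS hcS hbS hcb.ne hcb
      exact ⟨c, Finset.mem_sdiff.2 ⟨hc, hcS⟩, Or.inr hcb⟩
    · exact ⟨b, Finset.mem_sdiff.2 ⟨hb, hbS⟩, Dominates.refl b⟩
  have hcardB : C.card + (isolatedVertices G B).card = B.card :=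
    Finset.card_sdiff_add_card_eq_card fun b hb => (mem_isolatedVertices.1 hb).1
  have hcardC : (C \ S).card + S.card = C.card := Finset.card_sdiff_add_card_eq_card hSC
  obtain hle | hle : 2 * S.card ≤ C.card ∨ 2 * (C \ S).card ≤ C.card := by omega
  · exact ⟨S, by omega, fun b hb hiso => hdom b (Finset.mem_sdiff.2 ⟨hb, hiso⟩)⟩
  · exact ⟨C \ S, by omega, fun b hb hiso => hcompl b (Finset.mem_sdiff.2 ⟨hb, hiso⟩)⟩

theorem two_mul_domNum_le_card_add_card_add_card_isolatedVertices [Fintype V]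
    {A F : Finset V} (hFA : F ⊆ A) (hF : ∀ v ∉ A, ∃ u ∈ F, Dominates G u v) :
    2 * domNum G ≤ A.card + F.card + (isolatedVertices G A).card := by
  classical
  obtain ⟨S, hScard, hSdom⟩ :=
    exists_dominating_two_mul_card_add_card_isolatedVertices_le G (A \ F)
  let J := isolatedVertices G A \ F
  have hdom : IsDomSet G ↑(F ∪ J ∪ S) := by
    refine isDomSet_iff_dominates.2 fun v => ?_
    suffices (∃ u ∈ F, Dominates G u v) ∨ v ∈ J ∨ ∃ s ∈ S, Dominates G s v by
      rcases this with ⟨u, hu, huv⟩ | hv | ⟨s, hs, hsv⟩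
      · exact ⟨u, by simp [hu], huv⟩
      · exact ⟨v, by simp [hv], Dominates.refl v⟩
      · exact ⟨s, by simp [hs], hsv⟩
    by_cases hvA : v ∉ A
    · exact Or.inl (hF v hvA)
    by_cases hvF : ∃ u ∈ F, Dominates G u v
    · exact Or.inl hvF
    have hvAF : v ∈ A \ F :=
      Finset.mem_sdiff.2 ⟨not_not.1 hvA, fun hv => hvF ⟨v, hv, Dominates.refl v⟩⟩
    by_cases hiso : v ∈ isolatedVertices G (A \ F)
    · refine Or.inr (Or.inl (Finset.mem_sdiff.2 ⟨?_, (Finset.mem_sdiff.1 hvAF).2⟩))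
      refine mem_isolatedVertices.2 ⟨not_not.1 hvA, fun u hu huv => ?_⟩
      have huF : u ∉ F := fun huF => hvF ⟨u, huF, Or.inr huv⟩
      exact (mem_isolatedVertices.1 hiso).2 u (Finset.mem_sdiff.2 ⟨hu, huF⟩) huv
    · exact Or.inr (Or.inr (hSdom v hvAF hiso))
  have hJcard : J.card ≤ (isolatedVertices G (A \ F)).card :=
    Finset.card_le_card (isolatedVertices_sdiff_subset A F)
  have hJcard' : J.card ≤ (isolatedVertices G A).card := Finset.card_le_card Finset.sdiff_subset
  have hAF := Finset.card_sdiff_add_card_eq_card hFA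
  calc 2 * domNum G ≤ 2 * (F ∪ J ∪ S).card := Nat.mul_le_mul_left 2 hdom.domNum_le_card
    _ ≤ 2 * (F.card + J.card + S.card) := by grw [Finset.card_union_le, Finset.card_union_le]
    _ ≤ A.card + F.card + (isolatedVertices G A).card := by omega

end Domination

section ClawFree

variable {V : Type*} {G : SimpleGraph V}

theorem IsClawFree.not_isIndepSet_of_adj (hG : IsClawFree G) {c x y z : V}
    (hx : G.Adj c x) (hy : G.Adj c y) (hz : G.Adj c z) (hxy : x ≠ y) (hxz : x ≠ z) (hyz : y ≠ z) :
    ¬ G.IsIndepSet {x, y, z} := by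
  intro hindep
  have hnxy : ¬ G.Adj x y := hindep (by simp) (by simp) hxy
  have hnxz : ¬ G.Adj x z := hindep (by simp) (by simp) hxz
  have hnyz : ¬ G.Adj y z := hindep (by simp) (by simp) hyz
  let f : Fin 1 ⊕ Fin 3 → V := Sum.elim (fun _ => c) ![x, y, z]
  have hf : Function.Injective f := by
    rintro (a | a) (b | b) h <;> fin_cases a <;> fin_cases b <;>
      simp_all [f, hx.ne, hy.ne, hz.ne, hx.ne', hy.ne', hz.ne']
  have hadj : ∀ a b, (completeBipartiteGraph (Fin 1) (Fin 3)).Adj a b ↔ G.Adj (f a) (f b) := by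
    rintro (a | a) (b | b) <;> fin_cases a <;> fin_cases b <;>
      simp [f, hx, hy, hz, hnxy, hnxz, hnyz, hx.symm, hy.symm, hz.symm,
        mt Adj.symm hnxy, mt Adj.symm hnxz, mt Adj.symm hnyz]
  exact hG ⟨⟨f, hf⟩, hadj⟩

open scoped Classical in
theorem IsClawFree.card_filter_dominates_le_two (hG : IsClawFree G) {S : Finset V}
    (hS : G.IsIndepSet ↑S) (v : V) : (S.filter (Dominates G · v)).card ≤ 2 := by
  by_contra! hlt
  obtain ⟨x, hx, y, hy, z, hz, hxy, hxz, hyz⟩ := Finset.two_lt_card.1 hlt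
  simp only [Finset.mem_filter] at hx hy hz
  have adj_of_ne : ∀ {a b : V}, a ∈ S ∧ Dominates G a v → b ∈ S ∧ Dominates G b v → a ≠ b →
      G.Adj v a := by
    rintro a b ⟨ha, rfl | hav⟩ ⟨hb, hbv⟩ hab
    · exact absurd (hbv.eq_of_isIndepSet hS hb ha).symm hab
    · exact hav.symm
  refine hG.not_isIndepSet_of_adj (adj_of_ne hx hy hxy) (adj_of_ne hy hx hxy.symm)
    (adj_of_ne hz hx hxz.symm) hxy hxz hyz (Set.Pairwise.mono ?_ hS)
  simp [Set.insert_subset_iff, hx.1, hy.1, hz.1]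

-- Allan and Laskar: extend a maximal independent subset `S` of a minimum dominating set `D` to a
-- maximal independent set `T`. Each vertex of `D \ S` dominates at most two vertices of `T`, one of
-- which is in `S`, so `T \ S` is no larger than `D \ S`.
theorem IsClawFree.exists_isMinDomSet_isIndepSet [Fintype V] (hG : IsClawFree G) :
    ∃ Γ : Finset V, IsMinDomSet G Γ ∧ G.IsIndepSet ↑Γ := by
  classical
  obtain ⟨D, hD, hDcard⟩ := exists_isMinDomSet G
  obtain ⟨S, -, hSD, hS, hSdom⟩ :=
    exists_isIndepSet_superset_dominating (G := G) (Finset.empty_subset D) (by simp)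
  obtain ⟨T, hST, -, hT, hTdom⟩ := exists_isIndepSet_superset_dominating S.subset_univ hS
  have hdominated : ∀ t ∈ T \ S, ∃ d, d ∈ D \ S ∧ Dominates G d t := by
    intro t ht
    obtain ⟨htT, htS⟩ := Finset.mem_sdiff.1 ht
    obtain ⟨d, hdD, hdt⟩ := isDomSet_iff_dominates.1 hD t
    refine ⟨d, Finset.mem_sdiff.2 ⟨hdD, fun hdS => htS ?_⟩, hdt⟩
    exact hdt.eq_of_isIndepSet hT (hST hdS) htT ▸ hdS
  have hunique : ∀ d ∈ D \ S, ({t ∈ T \ S | Dominates G d t} : Set V).Subsingleton := by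
    rintro d hd t ⟨ht, hdt⟩ t' ⟨ht', hdt'⟩
    by_contra htt'
    obtain ⟨s, hs, hsd⟩ := hSdom d (Finset.mem_sdiff.1 hd).1
    obtain ⟨htT, htS⟩ := Finset.mem_sdiff.1 ht
    obtain ⟨htT', htS'⟩ := Finset.mem_sdiff.1 ht'
    refine (hG.card_filter_dominates_le_two hT d).not_gt (Finset.two_lt_card.2
      ⟨s, Finset.mem_filter.2 ⟨hST hs, hsd⟩, t, Finset.mem_filter.2 ⟨htT, hdt.symm⟩,
        t', Finset.mem_filter.2 ⟨htT', hdt'.symm⟩, ?_, ?_, htt'⟩)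
    · exact fun h => htS (h ▸ hs)
    · exact fun h => htS' (h ▸ hs)
  have hle : (T \ S).card ≤ (D \ S).card :=
    Finset.card_le_card_of_forall_subsingleton (fun t d => Dominates G d t) hdominated hunique
  have hTS := Finset.card_sdiff_add_card_eq_card hST
  have hDS := Finset.card_sdiff_add_card_eq_card hSD
  have hTdomSet : IsDomSet G ↑T := isDomSet_iff_dominates.2 fun v => hTdom v (Finset.mem_univ v)
  have hmin := hTdomSet.domNum_le_card
  exact ⟨T, ⟨hTdomSet, by omega⟩, hT⟩

end ClawFree

section BoxProd

variable {V W : Type*} {G : SimpleGraph V} {H : SimpleGraph W}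

/-- `w` is in the closed private neighborhood of `v` with respect to `Γ`: among the members of `Γ`,
only `v` dominates `w`. Unlike in `PrivNbr`, `w` may itself belong to `Γ`. -/
def ClosedPrivNbr (G : SimpleGraph V) (Γ : Set V) (v w : V) : Prop :=
  Dominates G v w ∧ ∀ u ∈ Γ, Dominates G u w → u = v

theorem closedPrivNbr_self {Γ : Set V} (hΓ : G.IsIndepSet Γ) {v : V} (hv : v ∈ Γ) :
    ClosedPrivNbr G Γ v v :=
  ⟨Dominates.refl v, fun _ hu huv => huv.eq_of_isIndepSet hΓ hu hv⟩

open scoped Classical in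
theorem card_filter_dominates_add_card_filter_closedPrivNbr_le (G : SimpleGraph V) (Γ : Finset V)
    (w : V) :
    (Γ.filter (Dominates G · w)).card + (Γ.filter (ClosedPrivNbr G Γ · w)).card ≤
      max 2 (Γ.filter (Dominates G · w)).card := by
  obtain hpriv | ⟨v, hv⟩ := (Γ.filter (ClosedPrivNbr G Γ · w)).eq_empty_or_nonempty
  · simp [hpriv]
  · have hdom : (Γ.filter (Dominates G · w)).card ≤ 1 := by
      refine (Finset.card_le_card fun u hu => ?_).trans_eq (Finset.card_singleton v)
      obtain ⟨huΓ, huw⟩ := Finset.mem_filter.1 hu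
      exact Finset.mem_singleton.2 ((Finset.mem_filter.1 hv).2.2 u huΓ huw)
    have hle : (Γ.filter (ClosedPrivNbr G Γ · w)).card ≤ (Γ.filter (Dominates G · w)).card :=
      Finset.card_le_card (Finset.monotone_filter_right Γ fun _ _ hu => hu.1)
    omega

open scoped Classical in
/-- The rows `h` in which `D` has a point `(v, h)` whose column `v` satisfies `P`. -/
noncomputable def rowsMeeting (D : Finset (V × W)) (P : V → Prop) : Finset W :=
  (D.filter fun p => P p.1).image Prod.snd

theorem mem_rowsMeeting {D : Finset (V × W)} {P : V → Prop} {h : W} :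
    h ∈ rowsMeeting D P ↔ ∃ v, P v ∧ (v, h) ∈ D := by
  simp [rowsMeeting, and_comm]

theorem rowsMeeting_mono (D : Finset (V × W)) {P Q : V → Prop} (hPQ : ∀ v, P v → Q v) :
    rowsMeeting D P ⊆ rowsMeeting D Q :=
  fun _ hh =>
    let ⟨v, hv, hvh⟩ := mem_rowsMeeting.1 hh
    mem_rowsMeeting.2 ⟨v, hPQ v hv, hvh⟩

open scoped Classical in
theorem sum_card_rowsMeeting_le {ι : Type*} (D : Finset (V × W)) (Γ : Finset ι)
    (R : ι → V → Prop) :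
    ∑ i ∈ Γ, (rowsMeeting D (R i)).card ≤ ∑ p ∈ D, (Γ.filter (R · p.1)).card :=
  calc ∑ i ∈ Γ, (rowsMeeting D (R i)).card
      ≤ ∑ i ∈ Γ, (D.filter fun p => R i p.1).card :=
        Finset.sum_le_sum fun _ _ => Finset.card_image_le
    _ = ∑ p ∈ D, (Γ.filter (R · p.1)).card :=
        Finset.sum_card_bipartiteAbove_eq_sum_card_bipartiteBelow fun i (p : V × W) => R i p.1

open scoped Classical in
theorem sum_card_rowsMeeting_dominates_add_closedPrivNbr_le {Γ : Finset V} {r : ℕ} (hr : 2 ≤ r)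
    (hmult : ∀ v, (Γ.filter (Dominates G · v)).card ≤ r) (D : Finset (V × W)) :
    ∑ i ∈ Γ, ((rowsMeeting D (Dominates G i)).card +
      (rowsMeeting D (ClosedPrivNbr G Γ i)).card) ≤ r * D.card :=
  calc ∑ i ∈ Γ, ((rowsMeeting D (Dominates G i)).card +
        (rowsMeeting D (ClosedPrivNbr G Γ i)).card)
      ≤ ∑ p ∈ D, ((Γ.filter (Dominates G · p.1)).card +
          (Γ.filter (ClosedPrivNbr G Γ · p.1)).card) := by
        rw [Finset.sum_add_distrib, Finset.sum_add_distrib]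
        exact add_le_add (sum_card_rowsMeeting_le D Γ (Dominates G))
          (sum_card_rowsMeeting_le D Γ (ClosedPrivNbr G Γ))
    _ ≤ ∑ _p ∈ D, r := Finset.sum_le_sum fun p _ =>
        (card_filter_dominates_add_card_filter_closedPrivNbr_le G Γ p.1).trans
          (max_le hr (hmult p.1))
    _ = r * D.card := by rw [Finset.sum_const, smul_eq_mul, mul_comm]

theorem IsDomSet.exists_mem_row_or_column {D : Set (V × W)} (hD : IsDomSet (G □ H) D)
    (v : V) (h : W) :
    (∃ u, (u, h) ∈ D ∧ Dominates G u v) ∨ ∃ g, (v, g) ∈ D ∧ H.Adj g h := by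
  rcases hD (v, h) with hmem | ⟨⟨u, g⟩, hmem, ⟨huv, rfl⟩ | ⟨hgh, rfl⟩⟩
  · exact Or.inl ⟨v, hmem, Dominates.refl v⟩
  · exact Or.inl ⟨u, hmem, Or.inr huv⟩
  · exact Or.inr ⟨g, hmem, hgh⟩

theorem two_mul_domNum_le_card_rowsMeeting [Fintype W] {D : Finset (V × W)}
    (hD : IsDomSet (G □ H) ↑D) {Γ : Set V} (hΓ : G.IsIndepSet Γ) {i : V} (hi : i ∈ Γ) :
    2 * domNum H ≤ (rowsMeeting D (Dominates G i)).card +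
      (rowsMeeting D (ClosedPrivNbr G Γ i)).card +
      (isolatedVertices H (rowsMeeting D (Dominates G i))).card := by
  refine two_mul_domNum_le_card_add_card_add_card_isolatedVertices
    (rowsMeeting_mono D fun _ hv => hv.1) fun h hh => ?_
  rcases hD.exists_mem_row_or_column i h with ⟨u, hu, hui⟩ | ⟨g, hg, hgh⟩
  · exact absurd (mem_rowsMeeting.2 ⟨u, hui.symm, hu⟩) hh
  · exact ⟨g, mem_rowsMeeting.2 ⟨i, closedPrivNbr_self hΓ hi, hg⟩, Or.inr hgh⟩

open scoped Classical in
theorem card_filter_mem_isolatedVertices_le [Fintype V] {D : Finset (V × W)}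
    (hD : IsDomSet (G □ H) ↑D) {Γ : Finset V} (hΓ : IsMinDomSet G Γ) (h : W) :
    (Γ.filter fun i => h ∈ isolatedVertices H (rowsMeeting D (Dominates G i))).card ≤
      (D.filter fun p => p.2 = h).card := by
  let row := (D.filter fun p => p.2 = h).image Prod.fst
  let isolated : V → Prop := fun i => h ∈ isolatedVertices H (rowsMeeting D (Dominates G i))
  have mem_row {u : V} (hu : (u, h) ∈ D) : u ∈ row :=
    Finset.mem_image.2 ⟨(u, h), Finset.mem_filter.2 ⟨hu, rfl⟩, rfl⟩
  have hdom : IsDomSet G ↑(row ∪ Γ.filter (¬ isolated ·)) := by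
    refine isDomSet_iff_dominates.2 fun v => ?_
    obtain ⟨i, hi, hiv⟩ := isDomSet_iff_dominates.1 hΓ.1 v
    by_cases hiso : isolated i
    · rcases hD.exists_mem_row_or_column v h with ⟨u, hu, huv⟩ | ⟨g, hg, hgh⟩
      · exact ⟨u, Finset.mem_union_left _ (mem_row hu), huv⟩
      · exact absurd hgh ((mem_isolatedVertices.1 hiso).2 g (mem_rowsMeeting.2 ⟨v, hiv, hg⟩))
    · exact ⟨i, Finset.mem_union_right _ (Finset.mem_filter.2 ⟨hi, hiso⟩), hiv⟩
  have hrow : row.card ≤ (D.filter fun p => p.2 = h).card := Finset.card_image_le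
  have hunion := hdom.domNum_le_card.trans (Finset.card_union_le _ _)
  have hsplit := Γ.card_filter_add_card_filter_not isolated
  have hmin : Γ.card = domNum G := hΓ.2
  change (Γ.filter isolated).card ≤ _
  omega

theorem sum_card_isolatedVertices_le [Fintype V] {D : Finset (V × W)}
    (hD : IsDomSet (G □ H) ↑D) {Γ : Finset V} (hΓ : IsMinDomSet G Γ) :
    ∑ i ∈ Γ, (isolatedVertices H (rowsMeeting D (Dominates G i))).card ≤ D.card := by
  classical
  let I (i : V) : Finset W := isolatedVertices H (rowsMeeting D (Dominates G i))
  have hrows (i : V) : I i ⊆ D.image Prod.snd := by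
    intro h hh
    obtain ⟨v, -, hvh⟩ := mem_rowsMeeting.1 (mem_isolatedVertices.1 hh).1
    exact Finset.mem_image_of_mem Prod.snd hvh
  calc ∑ i ∈ Γ, (I i).card
      = ∑ i ∈ Γ, ((D.image Prod.snd).filter (· ∈ I i)).card := by
        simp only [Finset.filter_mem_eq_inter, Finset.inter_eq_right.2 (hrows _)]
    _ = ∑ h ∈ D.image Prod.snd, (Γ.filter (h ∈ I ·)).card :=
        Finset.sum_card_bipartiteAbove_eq_sum_card_bipartiteBelow fun i h => h ∈ I i
    _ ≤ ∑ h ∈ D.image Prod.snd, (D.filter fun p => p.2 = h).card := by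
        gcongr with h
        convert card_filter_mem_isolatedVertices_le hD hΓ h
    _ = D.card := (Finset.card_eq_sum_card_image Prod.snd D).symm

open scoped Classical in
theorem two_mul_domNum_mul_domNum_le [Fintype V] [Fintype W] (H : SimpleGraph W) {Γ : Finset V}
    (hΓ : IsMinDomSet G Γ) (hindep : G.IsIndepSet ↑Γ) {r : ℕ} (hr : 2 ≤ r)
    (hmult : ∀ v, (Γ.filter (Dominates G · v)).card ≤ r) :
    2 * (domNum G * domNum H) ≤ (r + 1) * domNum (G □ H) := by
  obtain ⟨D, hD, hDcard⟩ := exists_isMinDomSet (G □ H)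
  let A (i : V) : Finset W := rowsMeeting D (Dominates G i)
  let F (i : V) : Finset W := rowsMeeting D (ClosedPrivNbr G Γ i)
  calc 2 * (domNum G * domNum H) = ∑ i ∈ Γ, 2 * domNum H := by
        rw [Finset.sum_const, smul_eq_mul, hΓ.2, mul_left_comm]
    _ ≤ ∑ i ∈ Γ, ((A i).card + (F i).card + (isolatedVertices H (A i)).card) :=
        Finset.sum_le_sum fun i hi => two_mul_domNum_le_card_rowsMeeting hD hindep hi
    _ = ∑ i ∈ Γ, ((A i).card + (F i).card) + ∑ i ∈ Γ, (isolatedVertices H (A i)).card :=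
        Finset.sum_add_distrib
    _ ≤ r * D.card + D.card :=
        add_le_add (sum_card_rowsMeeting_dominates_add_closedPrivNbr_le hr hmult D)
          (sum_card_isolatedVertices_le hD hΓ)
    _ = (r + 1) * domNum (G □ H) := by rw [hDcard, add_one_mul]

end BoxProd

theorem clawfree_vizing_bound {V W : Type*} [Fintype V] [Fintype W]
    (G : SimpleGraph V) (H : SimpleGraph W) (hG : IsClawFree G) :
    3 * domNum (G.boxProd H) ≥ 2 * (domNum G * domNum H) := by
  obtain ⟨Γ, hΓ, hindep⟩ := hG.exists_isMinDomSet_isIndepSet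
  exact two_mul_domNum_mul_domNum_le H hΓ hindep le_rfl (hG.card_filter_dominates_le_two hindep)
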